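/- Let θ ∈ [0,π] and λ ∈ ℝ. The matrix W_I(θ) − λ·P is block positive (i.e. Re⟨x⊗y, (W_I(θ) − λP)(x⊗y)⟩ ≥ 0 for all x,y : Fin 4 → ℂ) if and only if λ ≤ 2. -/

import Mathlib

open Matrix Complex Real

/-- The tensor (product) vector `x ⊗ y` in `ℂ¹⁶`. -/
noncomputable def tensorVec (x y : Fin 4 → ℂ) : Fin 4 × Fin 4 → ℂ :=
  fun p => x p.1 * y p.2

/-- The expectation `⟨v, W v⟩ = ∑ i, conj (v i) * (W *ᵥ v) i`. -/
noncomputable def expec (W : Matrix (Fin 4 × Fin 4) (Fin 4 × Fin 4) ℂ)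
    (v : Fin 4 × Fin 4 → ℂ) : ℂ :=
  ∑ i, star (v i) * W.mulVec v i

/-- The Bell-diagonal matrix `W[a,b,c,d]` with `(α₀,α₁,α₂,α₃) = (a,b,c,d)`:
`W((k,m),(k',m')) = α_{(m−k) mod 4}` if `k=k', m=m'`; `−1` if `k=m, k'=m', k≠k'`;
`0` otherwise. -/
noncomputable def Wabcd (a b c d : ℝ) : Matrix (Fin 4 × Fin 4) (Fin 4 × Fin 4) ℂ :=
  fun p q =>
    if p.1 = q.1 ∧ p.2 = q.2 then ((![a, b, c, d] (p.2 - p.1) : ℝ) : ℂ)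
    else if p.1 = p.2 ∧ q.1 = q.2 ∧ p.1 ≠ q.1 then -1
    else 0

/-- The class-I witness `W_I(θ)`. -/
noncomputable def WI (θ : ℝ) : Matrix (Fin 4 × Fin 4) (Fin 4 × Fin 4) ℂ :=
  Wabcd ((2 - Real.sin θ) / 2) ((1 + Real.cos θ) / 2)
        (2 - (2 - Real.sin θ) / 2) (1 - (1 + Real.cos θ) / 2)

/-- The class-II witness `W_II(θ)`. -/
noncomputable def WII (θ : ℝ) : Matrix (Fin 4 × Fin 4) (Fin 4 × Fin 4) ℂ :=
  Wabcd ((1 + Real.cos θ) / 2) ((2 - Real.sin θ) / 2)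
        (1 - (1 + Real.cos θ) / 2) (2 - (2 - Real.sin θ) / 2)

/-- The maximally entangled vector `Ψ(j,j') = (−1)^{j+1}/2` if `j = j'`, else `0`. -/
noncomputable def PsiVec : Fin 4 × Fin 4 → ℂ :=
  fun p => if p.1 = p.2 then ((-1 : ℂ) ^ ((p.1 : ℕ) + 1)) / 2 else 0

/-- The rank-one projector `P = |Ψ⟩⟨Ψ|`. -/
noncomputable def Pmat : Matrix (Fin 4 × Fin 4) (Fin 4 × Fin 4) ℂ :=
  fun u v => PsiVec u * star (PsiVec v)

/-- The indicator of the diagonal, i.e. the unnormalised maximally entangled vector. -/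
noncomputable def diagVec : Fin 4 × Fin 4 → ℂ :=
  fun p => if p.1 = p.2 then 1 else 0

lemma expec_sub (A B : Matrix (Fin 4 × Fin 4) (Fin 4 × Fin 4) ℂ) (v : Fin 4 × Fin 4 → ℂ) :
    expec (A - B) v = expec A v - expec B v := by
  simp only [expec, Matrix.sub_mulVec, Pi.sub_apply, mul_sub, Finset.sum_sub_distrib]

lemma expec_smul (r : ℂ) (A : Matrix (Fin 4 × Fin 4) (Fin 4 × Fin 4) ℂ)
    (v : Fin 4 × Fin 4 → ℂ) : expec (r • A) v = r * expec A v := by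
  simp only [expec, Matrix.smul_mulVec, Pi.smul_apply, smul_eq_mul, Finset.mul_sum]
  exact Finset.sum_congr rfl fun i _ => by ring

lemma expec_diagonal (w : Fin 4 × Fin 4 → ℝ) (v : Fin 4 × Fin 4 → ℂ) :
    expec (Matrix.diagonal fun p => (w p : ℂ)) v = ((∑ p, w p * ‖v p‖ ^ 2 : ℝ) : ℂ) := by
  simp only [expec, Matrix.mulVec_diagonal]
  push_cast
  refine Finset.sum_congr rfl fun i _ => ?_
  rw [← Complex.conj_mul', starRingEnd_apply]
  ring

lemma expec_rankOne (f v : Fin 4 × Fin 4 → ℂ) :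
    expec (Matrix.vecMulVec f (star f)) v = ((‖∑ q, star (f q) * v q‖ ^ 2 : ℝ) : ℂ) := by
  push_cast
  rw [← Complex.conj_mul', map_sum, Finset.sum_mul]
  simp only [expec, Matrix.mulVec, dotProduct, Matrix.vecMulVec_apply, Pi.star_apply, Finset.mul_sum]
  refine Finset.sum_congr rfl fun i _ => Finset.sum_congr rfl fun j _ => ?_
  simp only [map_mul, starRingEnd_apply, star_star]
  ring

lemma Wabcd_eq_diagonal_sub (a b c d : ℝ) :
    Wabcd a b c d =
      Matrix.diagonal (fun p : Fin 4 × Fin 4 =>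
        ((![a, b, c, d] (p.2 - p.1) + (if p.1 = p.2 then 1 else 0) : ℝ) : ℂ)) -
      Matrix.vecMulVec diagVec (star diagVec) := by
  ext ⟨k, m⟩ ⟨k', m'⟩
  by_cases h : k = k' ∧ m = m'
  · obtain ⟨rfl, rfl⟩ := h
    by_cases hk : k = m <;> simp [Wabcd, diagVec, Matrix.vecMulVec_apply, hk]
  · by_cases hk : k = m <;> by_cases hk' : k' = m' <;>
      simp [Wabcd, diagVec, Matrix.vecMulVec_apply, Matrix.diagonal_apply, h, hk, hk'] <;>
      grind

/-- The expectation of `W[a,b,c,d] - λ P` at a product vector. -/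
lemma re_expec_tensorVec (a b c d lam : ℝ) (x y : Fin 4 → ℂ) :
    (expec (Wabcd a b c d - (lam : ℂ) • Pmat) (tensorVec x y)).re =
      (∑ k, ∑ m, (![a, b, c, d] (m - k) + if k = m then 1 else 0) * (‖x k‖ * ‖y m‖) ^ 2)
      - ‖(x 0 * y 0 + x 2 * y 2) + (x 1 * y 1 + x 3 * y 3)‖ ^ 2
      - lam / 4 * ‖(x 0 * y 0 + x 2 * y 2) - (x 1 * y 1 + x 3 * y 3)‖ ^ 2 := by
  have hdiag : ∑ q, star (diagVec q) * tensorVec x y q =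
      (x 0 * y 0 + x 2 * y 2) + (x 1 * y 1 + x 3 * y 3) := by
    simp [Fintype.sum_prod_type, Fin.sum_univ_four, diagVec, tensorVec]
    ring
  have hPsi : ∑ q, star (PsiVec q) * tensorVec x y q =
      (-1 / 2) * ((x 0 * y 0 + x 2 * y 2) - (x 1 * y 1 + x 3 * y 3)) := by
    simp [Fintype.sum_prod_type, Fin.sum_univ_four, PsiVec, tensorVec, map_ofNat]
    ring
  have hP : Pmat = Matrix.vecMulVec PsiVec (star PsiVec) := rfl
  rw [Wabcd_eq_diagonal_sub, expec_sub, expec_sub, expec_smul, hP, expec_rankOne, expec_rankOne,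
    expec_diagonal, hdiag, hPsi, ← Complex.ofReal_mul, ← Complex.ofReal_sub,
    ← Complex.ofReal_sub, Complex.ofReal_re, Fintype.sum_prod_type, norm_mul (-1 / 2 : ℂ)]
  have hhalf : ‖(-1 / 2 : ℂ)‖ = 1 / 2 := by norm_num
  rw [hhalf]
  simp only [tensorVec, norm_mul]
  ring

lemma norm_add_sq_add_half_norm_sub_sq_le (u v : ℂ) {U V : ℝ} (hu : ‖u‖ ≤ U) (hv : ‖v‖ ≤ V) :
    ‖u + v‖ ^ 2 + 1 / 2 * ‖u - v‖ ^ 2 ≤ 3 / 2 * (U ^ 2 + V ^ 2) + U * V := by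
  have hpar := parallelogram_law_with_norm ℝ u v
  have hU : ‖u‖ ^ 2 ≤ U ^ 2 := by gcongr
  have hV : ‖v‖ ^ 2 ≤ V ^ 2 := by gcongr
  have hsum : ‖u + v‖ ^ 2 ≤ (U + V) ^ 2 := by
    have := norm_add_le u v
    gcongr
    linarith
  nlinarith

/-- The extremal case, in rotated coordinates `u, v`, of the determinant inequality. -/
lemma rotated_quartic_nonneg (p q u v : ℝ) :
    0 ≤ (|p * u - q * v| + |p * v + q * u|) *
        ((|p * u - q * v| + 3 * |p * v + q * u|) * u ^ 2 +
          (3 * |p * u - q * v| + |p * v + q * u|) * v ^ 2) +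
      4 * q * u * v * (p * (u ^ 2 - v ^ 2) - 4 * q * u * v) := by
  have hx := sq_abs (p * u - q * v)
  have hy := sq_abs (p * v + q * u)
  have hxy := abs_mul (p * u - q * v) (p * v + q * u)
  have hkey : -(2 * u * v) * (2 * ((p * u - q * v) * (p * v + q * u))) ≤
      (u ^ 2 + v ^ 2) * (2 * |(p * u - q * v) * (p * v + q * u)|) := by
    set w := (p * u - q * v) * (p * v + q * u)
    have h1 : |2 * u * v| ≤ u ^ 2 + v ^ 2 :=
      abs_le.2 ⟨by nlinarith [sq_nonneg (u + v)], two_mul_le_add_sq u v⟩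
    calc -(2 * u * v) * (2 * w) ≤ |(2 * u * v) * (2 * w)| := by
          rw [neg_mul]; exact neg_le_abs _
      _ = |2 * u * v| * (2 * |w|) := by rw [abs_mul, abs_mul 2 w, abs_two]
      _ ≤ _ := by gcongr
  rw [hxy] at hkey
  generalize |p * u - q * v| = x at *
  generalize |p * v + q * u| = y at *
  have hrest : 0 ≤ (u ^ 2 - v ^ 2) ^ 2 * (3 * q ^ 2 + p ^ 2) := by positivity
  have hid : (x + y) * ((x + 3 * y) * u ^ 2 + (3 * x + y) * v ^ 2) +
      4 * q * u * v * (p * (u ^ 2 - v ^ 2) - 4 * q * u * v) =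
      (u ^ 2 - v ^ 2) ^ 2 * (3 * q ^ 2 + p ^ 2) +
      2 * ((u ^ 2 + v ^ 2) * (2 * (x * y)) -
        -(2 * u * v) * (2 * ((p * u - q * v) * (p * v + q * u)))) := by
    have hexp : (x + y) * ((x + 3 * y) * u ^ 2 + (3 * x + y) * v ^ 2) =
        (x ^ 2 + 3 * y ^ 2) * u ^ 2 + (3 * x ^ 2 + y ^ 2) * v ^ 2
          + 4 * (x * y) * (u ^ 2 + v ^ 2) := by ring
    rw [hexp, hx, hy]
    ring
  rw [hid]
  linarith

lemma det_inequality (p q u v N M : ℝ)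
    (hN : 3 * |p * u - q * v| + |p * v + q * u| ≤ N)
    (hM : |p * u - q * v| + 3 * |p * v + q * u| ≤ M) :
    (N ^ 2 - (2 * p * u) ^ 2) * (M ^ 2 - (2 * p * v) ^ 2) ≤
      (N * M - 3 * (2 * p * u) ^ 2 + 8 * (p * u - q * v) * (2 * p * u)) *
        (N * M - 3 * (2 * p * v) ^ 2 + 8 * (p * v + q * u) * (2 * p * v)) := by
  have hquartic := rotated_quartic_nonneg p q u v
  have hx := abs_nonneg (p * u - q * v)
  have hy := abs_nonneg (p * v + q * u)
  have hmono : 4 * ((|p * u - q * v| + |p * v + q * u|) *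
        ((|p * u - q * v| + 3 * |p * v + q * u|) * u ^ 2 +
          (3 * |p * u - q * v| + |p * v + q * u|) * v ^ 2)) ≤
      (N + M) * (M * u ^ 2 + N * v ^ 2) := by
    rw [← mul_assoc]
    gcongr
    · linarith
    · linarith
  have hmain : 0 ≤ (N + M) * (M * u ^ 2 + N * v ^ 2) +
      16 * q * u * v * (p * (u ^ 2 - v ^ 2) - 4 * q * u * v) := by linarith
  have := mul_nonneg (sq_nonneg (2 * p)) hmain
  linear_combination this

/-- A quadratic form bound obtained by completing squares with multipliers `3 U / 2 + V / 2` and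
`U / 2 + 3 V / 2`. -/
lemma quadratic_le_of_det {A B E O U V : ℝ}
    (hA : ∀ t : ℝ, 2 * t * U - t ^ 2 * E ≤ A) (hB : ∀ t : ℝ, 2 * t * V - t ^ 2 * O ≤ B)
    (hE : 0 < 3 - 4 * E) (hdet : 1 ≤ (3 - 4 * E) * (3 - 4 * O)) :
    3 / 2 * (U ^ 2 + V ^ 2) + U * V ≤ A + B := by
  have h1 := hA (3 / 2 * U + V / 2)
  have h2 := hB (U / 2 + 3 / 2 * V)
  set s := 3 / 2 * U + V / 2
  set t := U / 2 + 3 / 2 * V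
  have hform : 0 ≤ (3 - 4 * E) * s ^ 2 - 2 * s * t + (3 - 4 * O) * t ^ 2 := by
    refine nonneg_of_mul_nonneg_right ?_ hE
    have : 0 ≤ ((3 - 4 * E) * s - t) ^ 2 + ((3 - 4 * E) * (3 - 4 * O) - 1) * t ^ 2 :=
      add_nonneg (sq_nonneg _) (mul_nonneg (by linarith) (sq_nonneg _))
    linear_combination this
  have hU : U = 3 / 4 * s - t / 4 := by simp only [s, t]; ring
  have hV : V = 3 / 4 * t - s / 4 := by simp only [s, t]; ring
  clear_value s t
  subst hU hV
  linear_combination h1 + h2 + hform / 4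

lemma completing_square (x y D t : ℝ) (hD : 0 < D) :
    2 * t * (x * y) - t ^ 2 * (y ^ 2 / D) ≤ D * x ^ 2 := by
  have h : D * x ^ 2 - (2 * t * (x * y) - t ^ 2 * (y ^ 2 / D)) = (D * x - t * y) ^ 2 / D := by
    field_simp
    ring
  have : 0 ≤ (D * x - t * y) ^ 2 / D := by positivity
  linarith

lemma quadratic_le_weighted_sum {D0 D1 D2 D3 : ℝ} (hD0 : 0 < D0) (hD1 : 0 < D1) (hD2 : 0 < D2)
    (hD3 : 0 < D3) (x0 x1 x2 x3 y0 y1 y2 y3 : ℝ)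
    (hsum : 0 < (3 * (D0 * D2) - 4 * (y0 ^ 2 * D2 + y2 ^ 2 * D0)) +
      (3 * (D1 * D3) - 4 * (y1 ^ 2 * D3 + y3 ^ 2 * D1)))
    (hdet : D0 * D2 * (D1 * D3) ≤ (3 * (D0 * D2) - 4 * (y0 ^ 2 * D2 + y2 ^ 2 * D0)) *
      (3 * (D1 * D3) - 4 * (y1 ^ 2 * D3 + y3 ^ 2 * D1))) :
    3 / 2 * ((x0 * y0 + x2 * y2) ^ 2 + (x1 * y1 + x3 * y3) ^ 2) +
        (x0 * y0 + x2 * y2) * (x1 * y1 + x3 * y3) ≤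
      D0 * x0 ^ 2 + D2 * x2 ^ 2 + (D1 * x1 ^ 2 + D3 * x3 ^ 2) := by
  have hP : 0 < D0 * D2 := by positivity
  have hQ : 0 < D1 * D3 := by positivity
  have hEven : 3 * (D0 * D2) - 4 * (y0 ^ 2 * D2 + y2 ^ 2 * D0) =
      (3 - 4 * (y0 ^ 2 / D0 + y2 ^ 2 / D2)) * (D0 * D2) := by field_simp
  have hOdd : 3 * (D1 * D3) - 4 * (y1 ^ 2 * D3 + y3 ^ 2 * D1) =
      (3 - 4 * (y1 ^ 2 / D1 + y3 ^ 2 / D3)) * (D1 * D3) := by field_simp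
  have hA (t : ℝ) : 2 * t * (x0 * y0 + x2 * y2) - t ^ 2 * (y0 ^ 2 / D0 + y2 ^ 2 / D2) ≤
      D0 * x0 ^ 2 + D2 * x2 ^ 2 := by
    linarith [completing_square x0 y0 D0 t hD0, completing_square x2 y2 D2 t hD2]
  have hB (t : ℝ) : 2 * t * (x1 * y1 + x3 * y3) - t ^ 2 * (y1 ^ 2 / D1 + y3 ^ 2 / D3) ≤
      D1 * x1 ^ 2 + D3 * x3 ^ 2 := by
    linarith [completing_square x1 y1 D1 t hD1, completing_square x3 y3 D3 t hD3]
  rw [hEven, hOdd] at hsum hdet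
  generalize y0 ^ 2 / D0 + y2 ^ 2 / D2 = E at *
  generalize y1 ^ 2 / D1 + y3 ^ 2 / D3 = O at *
  have hprod := lt_of_lt_of_le (mul_pos hP hQ) hdet
  have hEpos : 0 < 3 - 4 * E := by
    refine pos_of_mul_pos_left ?_ hP.le
    by_contra! hneg
    nlinarith
  refine quadratic_le_of_det hA hB hEpos (le_of_mul_le_mul_right ?_ (mul_pos hP hQ))
  linarith

/-- The inequality for moduli, in half-angle coordinates and away from the boundary. -/
lemma moduli_inequality_of_pos (p q : ℝ) (hpq : p ^ 2 + q ^ 2 = 1) (x0 x1 x2 x3 y0 y1 y2 y3 : ℝ)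
    (h0 : 0 < y0) (h1 : 0 < y1) (h2 : 0 < y2) (h3 : 0 < y3) :
    3 / 2 * ((x0 * y0 + x2 * y2) ^ 2 + (x1 * y1 + x3 * y3) ^ 2) +
        (x0 * y0 + x2 * y2) * (x1 * y1 + x3 * y3) ≤
      ((3 / 2 + p ^ 2) * y0 ^ 2 + (1 / 2 + p * q) * y1 ^ 2 + (3 / 2 - p ^ 2) * y2 ^ 2 +
          (1 / 2 - p * q) * y3 ^ 2) * x0 ^ 2 +
        ((3 / 2 + p ^ 2) * y2 ^ 2 + (1 / 2 + p * q) * y3 ^ 2 + (3 / 2 - p ^ 2) * y0 ^ 2 +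
          (1 / 2 - p * q) * y1 ^ 2) * x2 ^ 2 +
      (((3 / 2 + p ^ 2) * y1 ^ 2 + (1 / 2 + p * q) * y2 ^ 2 + (3 / 2 - p ^ 2) * y3 ^ 2 +
          (1 / 2 - p * q) * y0 ^ 2) * x1 ^ 2 +
        ((3 / 2 + p ^ 2) * y3 ^ 2 + (1 / 2 + p * q) * y0 ^ 2 + (3 / 2 - p ^ 2) * y1 ^ 2 +
          (1 / 2 - p * q) * y2 ^ 2) * x3 ^ 2) := by
  have hp : p ^ 2 ≤ 1 := by nlinarith
  have hb : 0 ≤ 1 / 2 + p * q := by nlinarith [sq_nonneg (p + q)]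
  have hd : 0 ≤ 1 / 2 - p * q := by nlinarith [sq_nonneg (p - q)]
  have hc : 0 < 3 / 2 - p ^ 2 := by linarith
  have hD (a b c d : ℝ) (ha : 0 < a) : 0 < (3 / 2 + p ^ 2) * a ^ 2 + (1 / 2 + p * q) * b ^ 2 +
      (3 / 2 - p ^ 2) * c ^ 2 + (1 / 2 - p * q) * d ^ 2 := by positivity
  have hD0 := hD y0 y1 y2 y3 h0
  have hD1 := hD y1 y2 y3 y0 h1
  have hD2 := hD y2 y3 y0 y1 h2
  have hD3 := hD y3 y0 y1 y2 h3
  set δ := (y0 ^ 2 - y2 ^ 2) / 2 with hδ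
  set ε := (y1 ^ 2 - y3 ^ 2) / 2 with hε
  set N := (3 * (y0 ^ 2 + y2 ^ 2) + (y1 ^ 2 + y3 ^ 2)) / 2 with hN
  set M := (3 * (y1 ^ 2 + y3 ^ 2) + (y0 ^ 2 + y2 ^ 2)) / 2 with hM
  obtain ⟨u, hu⟩ : ∃ u, u = p * δ + q * ε := ⟨_, rfl⟩
  obtain ⟨v, hv⟩ : ∃ v, v = p * ε - q * δ := ⟨_, rfl⟩
  have hδu : p * u - q * v = δ := by
    rw [hu, hv]; linear_combination δ * hpq
  have hεv : p * v + q * u = ε := by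
    rw [hu, hv]; linear_combination ε * hpq
  have habsδ : |δ| ≤ (y0 ^ 2 + y2 ^ 2) / 2 :=
    abs_le.2 ⟨by linarith [sq_nonneg y0], by linarith [sq_nonneg y2]⟩
  have habsε : |ε| ≤ (y1 ^ 2 + y3 ^ 2) / 2 :=
    abs_le.2 ⟨by linarith [sq_nonneg y1], by linarith [sq_nonneg y3]⟩
  have hdet := det_inequality p q u v N M (by rw [hδu, hεv]; linarith)
    (by rw [hδu, hεv]; linarith)
  rw [hδu, hεv] at hdet
  rw [show (3 / 2 + p ^ 2) * y0 ^ 2 + (1 / 2 + p * q) * y1 ^ 2 + (3 / 2 - p ^ 2) * y2 ^ 2 +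
      (1 / 2 - p * q) * y3 ^ 2 = N + 2 * p * u by rw [hN, hu, hδ, hε]; ring] at hD0 ⊢
  rw [show (3 / 2 + p ^ 2) * y1 ^ 2 + (1 / 2 + p * q) * y2 ^ 2 + (3 / 2 - p ^ 2) * y3 ^ 2 +
      (1 / 2 - p * q) * y0 ^ 2 = M + 2 * p * v by rw [hM, hv, hδ, hε]; ring] at hD1 ⊢
  rw [show (3 / 2 + p ^ 2) * y2 ^ 2 + (1 / 2 + p * q) * y3 ^ 2 + (3 / 2 - p ^ 2) * y0 ^ 2 +
      (1 / 2 - p * q) * y1 ^ 2 = N - 2 * p * u by rw [hN, hu, hδ, hε]; ring] at hD2 ⊢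
  rw [show (3 / 2 + p ^ 2) * y3 ^ 2 + (1 / 2 + p * q) * y0 ^ 2 + (3 / 2 - p ^ 2) * y1 ^ 2 +
      (1 / 2 - p * q) * y2 ^ 2 = M - 2 * p * v by rw [hM, hv, hδ, hε]; ring] at hD3 ⊢
  have hNM : 0 < N * M := by positivity
  have hEven : 3 * ((N + 2 * p * u) * (N - 2 * p * u)) -
      4 * (y0 ^ 2 * (N - 2 * p * u) + y2 ^ 2 * (N + 2 * p * u)) =
      N * M - 3 * (2 * p * u) ^ 2 + 8 * δ * (2 * p * u) := by
    rw [hN, hM, hδ]; ring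
  have hOdd : 3 * ((M + 2 * p * v) * (M - 2 * p * v)) -
      4 * (y1 ^ 2 * (M - 2 * p * v) + y3 ^ 2 * (M + 2 * p * v)) =
      N * M - 3 * (2 * p * v) ^ 2 + 8 * ε * (2 * p * v) := by
    rw [hN, hM, hε]; ring
  refine quadratic_le_weighted_sum hD0 hD1 hD2 hD3 x0 x1 x2 x3 y0 y1 y2 y3 ?_ ?_
  · rw [hEven, hOdd, ← hδu, ← hεv]
    have : 0 ≤ (p * u) ^ 2 + (p * v) ^ 2 := by positivity
    linear_combination 4 * this + 2 * hNM
  · rw [hEven, hOdd]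
    linear_combination hdet

lemma moduli_inequality (p q : ℝ) (hpq : p ^ 2 + q ^ 2 = 1) (x0 x1 x2 x3 y0 y1 y2 y3 : ℝ)
    (h0 : 0 ≤ y0) (h1 : 0 ≤ y1) (h2 : 0 ≤ y2) (h3 : 0 ≤ y3) :
    3 / 2 * ((x0 * y0 + x2 * y2) ^ 2 + (x1 * y1 + x3 * y3) ^ 2) +
        (x0 * y0 + x2 * y2) * (x1 * y1 + x3 * y3) ≤
      ((3 / 2 + p ^ 2) * y0 ^ 2 + (1 / 2 + p * q) * y1 ^ 2 + (3 / 2 - p ^ 2) * y2 ^ 2 +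
          (1 / 2 - p * q) * y3 ^ 2) * x0 ^ 2 +
        ((3 / 2 + p ^ 2) * y2 ^ 2 + (1 / 2 + p * q) * y3 ^ 2 + (3 / 2 - p ^ 2) * y0 ^ 2 +
          (1 / 2 - p * q) * y1 ^ 2) * x2 ^ 2 +
      (((3 / 2 + p ^ 2) * y1 ^ 2 + (1 / 2 + p * q) * y2 ^ 2 + (3 / 2 - p ^ 2) * y3 ^ 2 +
          (1 / 2 - p * q) * y0 ^ 2) * x1 ^ 2 +
        ((3 / 2 + p ^ 2) * y3 ^ 2 + (1 / 2 + p * q) * y0 ^ 2 + (3 / 2 - p ^ 2) * y1 ^ 2 +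
          (1 / 2 - p * q) * y2 ^ 2) * x3 ^ 2) := by
  have hpos (t : ℝ) (ht : t ∈ Set.Ioi (0 : ℝ)) :=
    moduli_inequality_of_pos p q hpq x0 x1 x2 x3 (y0 + t) (y1 + t) (y2 + t) (y3 + t)
      (add_pos_of_nonneg_of_pos h0 ht) (add_pos_of_nonneg_of_pos h1 ht)
      (add_pos_of_nonneg_of_pos h2 ht) (add_pos_of_nonneg_of_pos h3 ht)
  have hclosure : (0 : ℝ) ∈ closure (Set.Ioi (0 : ℝ)) := by simp
  simpa using le_on_closure hpos (by fun_prop) (by fun_prop) hclosure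

lemma WI_eq_half_angle (θ : ℝ) : ∃ p q : ℝ, p ^ 2 + q ^ 2 = 1 ∧
    WI θ = Wabcd (1 / 2 + p ^ 2) (1 / 2 + p * q) (3 / 2 - p ^ 2) (1 / 2 - p * q) := by
  refine ⟨Real.sin (π / 4 - θ / 2), Real.cos (π / 4 - θ / 2), Real.sin_sq_add_cos_sq _, ?_⟩
  have hs : Real.sin θ = 1 - 2 * Real.sin (π / 4 - θ / 2) ^ 2 := by
    rw [← Real.cos_pi_div_two_sub, show π / 2 - θ = 2 * (π / 4 - θ / 2) by ring,
      Real.cos_two_mul, Real.cos_sq']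
    ring
  have hc : Real.cos θ = 2 * Real.sin (π / 4 - θ / 2) * Real.cos (π / 4 - θ / 2) := by
    rw [← Real.sin_pi_div_two_sub, show π / 2 - θ = 2 * (π / 4 - θ / 2) by ring,
      Real.sin_two_mul]
  rw [WI, hs, hc]
  congr 1 <;> ring

theorem WI_minus_lambdaP_blockPositive_iff (θ lam : ℝ) (hθ : θ ∈ Set.Icc 0 π) :
    (∀ x y : Fin 4 → ℂ,
      0 ≤ (expec (WI θ - (lam : ℂ) • Pmat) (tensorVec x y)).re) ↔ lam ≤ 2 := by
  obtain ⟨p, q, hpq, hW⟩ := WI_eq_half_angle θ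
  rw [hW]
  constructor
  · intro h
    have h' := h ![1, 0, 1, 0] ![1, 0, 1, 0]
    rw [re_expec_tensorVec] at h'
    simp [Fin.sum_univ_four] at h'
    norm_num at h'
    linarith
  · intro hlam x y
    rw [re_expec_tensorVec]
    have hu : ‖x 0 * y 0 + x 2 * y 2‖ ≤ ‖x 0‖ * ‖y 0‖ + ‖x 2‖ * ‖y 2‖ := by
      simpa only [norm_mul] using norm_add_le (x 0 * y 0) (x 2 * y 2)
    have hv : ‖x 1 * y 1 + x 3 * y 3‖ ≤ ‖x 1‖ * ‖y 1‖ + ‖x 3‖ * ‖y 3‖ := by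
      simpa only [norm_mul] using norm_add_le (x 1 * y 1) (x 3 * y 3)
    have hnorm := norm_add_sq_add_half_norm_sub_sq_le _ _ hu hv
    have hmod := moduli_inequality p q hpq ‖x 0‖ ‖x 1‖ ‖x 2‖ ‖x 3‖ ‖y 0‖ ‖y 1‖ ‖y 2‖ ‖y 3‖
      (norm_nonneg _) (norm_nonneg _) (norm_nonneg _) (norm_nonneg _)
    have hlam' : lam / 4 * ‖(x 0 * y 0 + x 2 * y 2) - (x 1 * y 1 + x 3 * y 3)‖ ^ 2 ≤
        1 / 2 * ‖(x 0 * y 0 + x 2 * y 2) - (x 1 * y 1 + x 3 * y 3)‖ ^ 2 := by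
      exact mul_le_mul_of_nonneg_right (by linarith) (sq_nonneg _)
    generalize ‖(x 0 * y 0 + x 2 * y 2) - (x 1 * y 1 + x 3 * y 3)‖ ^ 2 = r at *
    generalize ‖(x 0 * y 0 + x 2 * y 2) + (x 1 * y 1 + x 3 * y 3)‖ ^ 2 = s at *
    have hsub : (0 - 1 : Fin 4) = 3 ∧ (0 - 2 : Fin 4) = 2 ∧ (0 - 3 : Fin 4) = 1 ∧
        (1 - 2 : Fin 4) = 3 ∧ (1 - 3 : Fin 4) = 2 ∧ (2 - 3 : Fin 4) = 3 ∧ (2 - 1 : Fin 4) = 1 ∧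
        (3 - 1 : Fin 4) = 2 ∧ (3 - 2 : Fin 4) = 1 := by decide
    simp [Fin.sum_univ_four, hsub]
    linarith
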